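/- Let φ ∈ C¹(ℝ⁺ × [0,T]) be a solution of the flow-map equation with admissible data (φ₀, g) such that φ₀ ≡ ε₀ is a positive constant, g' ≤ 0 on ℝ⁺, and inf_{(x,t) ∈ ℝ⁺×[0,T]} φ(x,t) > 0. Set ε(t) = φ(0,t) and η(x,t) = φ(x,t)/ε(t). Then: (i) ∂_t η(x,t) = −η(x,t) · ∫_0^x g'(z)/Φ(z,t) dz for all x ∈ ℝ⁺, t ∈ [0,T]; and (ii) for each fixed t ∈ [0,T], the function x ↦ φ(x,t) is monotone nondecreasing on ℝ⁺. -/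

import Mathlib

/-! For `0 ≤ x ≤ y` the quotient rule gives
`∂ₜ (φ(y,t) / φ(x,t)) = (φ(y,t) / φ(x,t)) (∫_y^∞ - ∫_x^∞) g'/Φ = -(φ(y,t) / φ(x,t)) ∫_x^y g'/Φ`.
The case `x = 0` is the equation for `η`. Since `g' ≤ 0` and `Φ ≥ 0`, the right-hand side is
nonnegative, so the ratio is nondecreasing in time; it equals `1` at `t = 0` because the initial
datum is constant, whence `φ(x,t) ≤ φ(y,t)`.

Splitting the integrals needs `g'/Φ` to be integrable on `(0,∞)`: it vanishes outside a bounded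
interval, and near `0` it is bounded because `|g'(z)| ≤ C z` (as `g'(0) = 0` and `g'` is `C¹`) while
`Φ(z,t) ≥ m z`. -/

open Set MeasureTheory Filter Topology

noncomputable def gD (g : ℝ → ℝ) (z : ℝ) : ℝ := derivWithin g (Set.Ici 0) z

noncomputable def Phi (φ : ℝ → ℝ → ℝ) (z t : ℝ) : ℝ := ∫ σ in (0:ℝ)..z, φ σ t

/-- Admissible data for the flow-map equation: `φ₀ ∈ C¹(ℝ⁺)`, `g ∈ C²(ℝ⁺)` with
compact support in `ℝ⁺`, `inf φ₀ > 0` and `g'(0) = 0`. -/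
def AdmissibleData (φ₀ g : ℝ → ℝ) : Prop :=
  ContDiffOn ℝ 1 φ₀ (Set.Ici 0) ∧
  ContDiffOn ℝ 2 g (Set.Ici 0) ∧
  (∃ a : ℝ, ∀ z ≥ a, g z = 0) ∧
  (∃ m : ℝ, 0 < m ∧ ∀ x ≥ (0:ℝ), m ≤ φ₀ x) ∧
  gD g 0 = 0

/-- `φ` is a `C¹(ℝ⁺ × I)` solution of the flow-map equation
`∂ₜφ(x,t) = φ(x,t) ∫_x^∞ g'(z)/Φ(z,t) dz`, `φ(x,0) = φ₀(x)`. -/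
def IsFlowMapSolution (φ₀ g : ℝ → ℝ) (φ : ℝ → ℝ → ℝ) (I : Set ℝ) : Prop :=
  ContDiffOn ℝ 1 (fun p : ℝ × ℝ => φ p.1 p.2) (Set.Ici 0 ×ˢ I) ∧
  (∀ x ≥ (0:ℝ), φ x 0 = φ₀ x) ∧
  (∀ x ≥ (0:ℝ), ∀ t ∈ I,
    HasDerivWithinAt (fun s => φ x s)
      (φ x t * ∫ z in Set.Ioi x, gD g z / Phi φ z t) I t)

/-- `inf_{(x,t) ∈ ℝ⁺ × I} φ(x,t) > 0`. -/
def PosInfOn (φ : ℝ → ℝ → ℝ) (I : Set ℝ) : Prop :=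
  ∃ m : ℝ, 0 < m ∧ ∀ x ≥ (0:ℝ), ∀ t ∈ I, m ≤ φ x t

lemma gD_eq_zero {g : ℝ → ℝ} {a z : ℝ} (ha : ∀ z ≥ a, g z = 0) (hz : a < z) : gD g z = 0 := by
  have h : g =ᶠ[𝓝[Set.Ici 0] z] fun _ => (0:ℝ) := by
    filter_upwards [mem_nhdsWithin_of_mem_nhds (Ioi_mem_nhds hz)] with w hw
    exact ha w (le_of_lt hw)
  unfold gD
  rw [h.derivWithin_eq (ha z hz.le)]
  simp

lemma gD_contDiffOn {g : ℝ → ℝ} (hg : ContDiffOn ℝ 2 g (Set.Ici 0)) :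
    ContDiffOn ℝ 1 (gD g) (Set.Ici 0) :=
  hg.derivWithin (uniqueDiffOn_Ici 0) (by norm_num)

/-- The mean value inequality, with `g'(0) = 0`, for a bound of `g''` on `[0, b]`. -/
lemma gD_bound {g : ℝ → ℝ} (hg : ContDiffOn ℝ 2 g (Set.Ici 0)) (h0 : gD g 0 = 0) (b : ℝ) :
    ∃ C : ℝ, ∀ z ∈ Set.Icc 0 b, |gD g z| ≤ C * z := by
  have h1 := gD_contDiffOn hg
  have hc : ContinuousOn (derivWithin (gD g) (Set.Ici 0)) (Set.Icc 0 b) :=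
    (h1.continuousOn_derivWithin (uniqueDiffOn_Ici 0) le_rfl).mono Set.Icc_subset_Ici_self
  obtain ⟨C, hC⟩ := isCompact_Icc.exists_bound_of_continuousOn hc
  refine ⟨C, fun z hz => ?_⟩
  have := Convex.norm_image_sub_le_of_norm_hasDerivWithin_le (f := gD g)
    (f' := derivWithin (gD g) (Set.Ici 0)) (s := Set.Icc 0 b) (C := C) (x := 0) (y := z)
    (fun w hw => ((h1.differentiableOn one_ne_zero w hw.1).hasDerivWithinAt).mono
      Set.Icc_subset_Ici_self)
    hC (convex_Icc 0 b) ⟨le_rfl, hz.1.trans hz.2⟩ hz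
  simpa [h0, Real.norm_eq_abs, abs_of_nonneg hz.1] using this

lemma phi_intervalIntegrable {φ : ℝ → ℝ → ℝ} {t : ℝ}
    (hc : ContinuousOn (fun x => φ x t) (Set.Ici 0)) {z : ℝ} (hz : 0 ≤ z) :
    IntervalIntegrable (fun x => φ x t) volume 0 z :=
  (hc.mono (by rw [Set.uIcc_of_le hz]; exact Set.Icc_subset_Ici_self)).intervalIntegrable

lemma le_Phi {φ : ℝ → ℝ → ℝ} {t m : ℝ}
    (hc : ContinuousOn (fun x => φ x t) (Set.Ici 0)) (hm : ∀ x ≥ (0:ℝ), m ≤ φ x t)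
    {z : ℝ} (hz : 0 ≤ z) : m * z ≤ Phi φ z t := by
  have := intervalIntegral.integral_mono_on hz (intervalIntegrable_const (c := m))
    (phi_intervalIntegrable hc hz) (fun x hx => hm x hx.1)
  simpa [Phi, mul_comm] using this

lemma integrableOn_ratio {g : ℝ → ℝ} {φ : ℝ → ℝ → ℝ} {t m : ℝ}
    (hg : ContDiffOn ℝ 2 g (Set.Ici 0)) (hsupp : ∃ a : ℝ, ∀ z ≥ a, g z = 0) (h0 : gD g 0 = 0)
    (hc : ContinuousOn (fun x => φ x t) (Set.Ici 0)) (hm0 : 0 < m)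
    (hm : ∀ x ≥ (0:ℝ), m ≤ φ x t) :
    IntegrableOn (fun z => gD g z / Phi φ z t) (Set.Ioi 0) := by
  obtain ⟨a, ha⟩ := hsupp
  set b := max a 0 with hb
  have hb0 : 0 ≤ b := le_max_right _ _
  obtain ⟨C, hC⟩ := gD_bound hg h0 b
  have hpos : ∀ z ∈ Set.Ioc 0 b, 0 < Phi φ z t := fun z hz =>
    (mul_pos hm0 hz.1).trans_le (le_Phi hc hm hz.1.le)
  have hPhi : ContinuousOn (fun z => Phi φ z t) (Set.Icc 0 b) := by
    have := intervalIntegral.continuousOn_primitive_interval (μ := volume) (a := 0) (b := b)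
      (f := fun x => φ x t) (by
        rw [Set.uIcc_of_le hb0]
        exact (hc.mono Set.Icc_subset_Ici_self).integrableOn_Icc)
    rwa [Set.uIcc_of_le hb0] at this
  have hcont : ContinuousOn (fun z => gD g z / Phi φ z t) (Set.Ioc 0 b) :=
    ((gD_contDiffOn hg).continuousOn.mono fun z hz => hz.1.le).div
      (hPhi.mono Set.Ioc_subset_Icc_self) fun z hz => (hpos z hz).ne'
  have hI : IntegrableOn (fun z => gD g z / Phi φ z t) (Set.Ioc 0 b) := by
    refine Integrable.of_bound (hcont.aestronglyMeasurable measurableSet_Ioc) (C / m) ?_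
    refine (ae_restrict_iff' measurableSet_Ioc).2 (Eventually.of_forall fun z hz => ?_)
    have h1 := hC z ⟨hz.1.le, hz.2⟩
    have h2 := le_Phi hc hm hz.1.le
    rw [Real.norm_eq_abs, abs_div, abs_of_pos (hpos z hz), div_le_div_iff₀ (hpos z hz) hm0]
    have hC0 : 0 ≤ C := nonneg_of_mul_nonneg_left ((abs_nonneg _).trans h1) hz.1
    calc |gD g z| * m ≤ C * z * m := by gcongr
      _ = C * (m * z) := by ring
      _ ≤ C * Phi φ z t := by gcongr
  refine hI.of_forall_sdiff_eq_zero measurableSet_Ioi fun z hz => ?_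
  have hbz : b < z := by
    by_contra h
    exact hz.2 ⟨hz.1, not_lt.1 h⟩
  rw [gD_eq_zero ha ((le_max_left _ _).trans_lt hbz), zero_div]

/-- The evolution equation for the ratio of the values of `φ` at two points `x ≤ y`. -/
lemma hasDerivWithinAt_ratio {φ₀ g : ℝ → ℝ} {φ : ℝ → ℝ → ℝ} {I : Set ℝ}
    (hadm : AdmissibleData φ₀ g) (hsol : IsFlowMapSolution φ₀ g φ I) (hinf : PosInfOn φ I)
    {x y t : ℝ} (hx : 0 ≤ x) (hxy : x ≤ y) (ht : t ∈ I) :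
    HasDerivWithinAt (fun s => φ y s / φ x s)
      (-(φ y t / φ x t) * ∫ z in x..y, gD g z / Phi φ z t) I t := by
  obtain ⟨m, hm0, hm⟩ := hinf
  obtain ⟨-, hg, hsupp, -, h0⟩ := hadm
  obtain ⟨hC1, -, hode⟩ := hsol
  have hc : ContinuousOn (fun x => φ x t) (Set.Ici 0) :=
    hC1.continuousOn.comp (f := fun x => (x, t)) (by fun_prop) fun x hx => ⟨hx, ht⟩
  have hint := integrableOn_ratio hg hsupp h0 hc hm0 fun x hx => hm x hx t ht
  have hne : φ x t ≠ 0 := (hm0.trans_le (hm x hx t ht)).ne'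
  have hsplit := intervalIntegral.integral_Ioi_sub_Ioi
    (hint.mono_set (Set.Ioi_subset_Ioi hx)) hxy
  refine ((hode y (hx.trans hxy) t ht).div (hode x hx t ht) hne).congr_deriv ?_
  rw [← hsplit]
  field_simp
  ring

/-- Lemma `lem_eq_eta`: for a solution `φ` with constant data `φ₀ ≡ ε₀ > 0`,
`g' ≤ 0` and positive infimum, the ratio `η(x,t) = φ(x,t)/ε(t)` (with `ε(t) = φ(0,t)`)
satisfies `∂ₜη(x,t) = −η(x,t) ∫_0^x g'(z)/Φ(z,t) dz`, and `x ↦ φ(x,t)` is monotone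
nondecreasing on `ℝ⁺` for each fixed `t`. -/
theorem statement5 (ε₀ T : ℝ) (g : ℝ → ℝ) (φ : ℝ → ℝ → ℝ)
    (hε₀ : 0 < ε₀) (hT : 0 < T)
    (hadm : AdmissibleData (fun _ => ε₀) g)
    (hg' : ∀ z ≥ (0:ℝ), gD g z ≤ 0)
    (hsol : IsFlowMapSolution (fun _ => ε₀) g φ (Set.Icc 0 T))
    (hinf : PosInfOn φ (Set.Icc 0 T)) :
    (∀ x ≥ (0:ℝ), ∀ t ∈ Set.Icc (0:ℝ) T,
      HasDerivWithinAt (fun s => φ x s / φ 0 s)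
        (-(φ x t / φ 0 t) * ∫ z in (0:ℝ)..x, gD g z / Phi φ z t) (Set.Icc 0 T) t) ∧
    (∀ t ∈ Set.Icc (0:ℝ) T, MonotoneOn (fun x => φ x t) (Set.Ici 0)) := by
  have hratio : ∀ {x y t : ℝ}, 0 ≤ x → x ≤ y → t ∈ Set.Icc 0 T → _ :=
    hasDerivWithinAt_ratio hadm hsol hinf
  refine ⟨fun x hx t ht => hratio le_rfl hx ht, fun t ht x hx y hy hxy => ?_⟩
  obtain ⟨m, hm0, hm⟩ := hinf
  have hpos : ∀ z ≥ (0:ℝ), ∀ s ∈ Set.Icc 0 T, 0 < φ z s := fun z hz s hs =>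
    hm0.trans_le (hm z hz s hs)
  have hx0 : 0 ≤ x := hx
  have hy0 : 0 ≤ y := hy
  have hmono : MonotoneOn (fun s => φ y s / φ x s) (Set.Icc 0 T) := by
    refine monotoneOn_of_hasDerivWithinAt_nonneg (convex_Icc 0 T)
      (fun s hs => (hratio hx0 hxy hs).continuousWithinAt)
      (fun s hs => (hratio hx0 hxy (interior_subset hs)).mono interior_subset) fun s hs => ?_
    have hs' := interior_subset hs
    have hI : ∫ z in x..y, gD g z / Phi φ z s ≤ 0 := by
      have hn : 0 ≤ ∫ z in x..y, -(gD g z / Phi φ z s) := by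
        refine intervalIntegral.integral_nonneg hxy fun z hz => ?_
        have hz0 : 0 ≤ z := hx0.trans hz.1
        exact neg_nonneg.2 (div_nonpos_of_nonpos_of_nonneg (hg' z hz0)
          (intervalIntegral.integral_nonneg hz0 fun w hw => (hpos w hw.1 s hs').le))
      rw [intervalIntegral.integral_neg] at hn
      linarith
    have hr := div_pos (hpos y hy0 s hs') (hpos x hx0 s hs')
    exact mul_nonneg_of_nonpos_of_nonpos (by linarith) hI
  have h := hmono ⟨le_rfl, hT.le⟩ ht ht.1
  simp only [hsol.2.1 x hx0, hsol.2.1 y hy0, div_self hε₀.ne'] at h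
  exact (one_le_div (hpos x hx0 t ht)).1 h
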